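/- arXiv:1907.00796 — 2 statements merged into one kernel-verified Lean document; each statement's English description precedes it below -/
import Mathlib

section
/- Fix 1 < α < 2 and t > 0, and define w : ℝ → ℝ by w(x) = inf_{y ∈ ℝ} ( −|y|^α + (x−y)²/(2t) ). Then w is finite everywhere, w is an even function of x, and w is not differentiable at x = 0. -/
/-- The time-`t` slice of the Hopf-formula solution of the eikonal equation with initial
datum `u₀(x) = -|x|^α`: `w(x) = inf_y ( -|y|^α + (x-y)²/(2t) )`. -/
noncomputable def hopfSlice (α t : ℝ) : ℝ → ℝ :=
  fun x => ⨅ y : ℝ, (-|y| ^ α + (x - y) ^ 2 / (2 * t))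

/-!
Where the Hopf formula `w(x) = inf_y (φ(y) + ‖x - y‖² / (2t))` is differentiable, its gradient is
`(x - y) / t` for every minimizer `y`, so the minimizer is unique. For `φ(y) = -‖y‖^α` with
`0 < α < 2` the function `-r^α + r² / (2t)` of the radius attains its minimum over `r ≥ 0` at a
positive radius: `r ↦ r^α` is a concave function of `r²`, hence lies below its tangent, and the
minimizing radius is the one where that tangent has slope `1 / (2t)`. Thus at `x = 0` every point
of a sphere is a minimizer, and the antipodal pair `±y` rules out differentiability.
-/

open Set

section HopfLax

/-- The Hopf formula for `∂_t u + |∇u|² / 2 = 0` with initial datum `φ`, at time `t`.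
The value at `x` is the junk value `0` if the set of competitors is not bounded below. -/
noncomputable def hopfLax {E : Type*} [SeminormedAddCommGroup E] (t : ℝ) (φ : E → ℝ) (x : E) : ℝ :=
  ⨅ y, (φ y + ‖x - y‖ ^ 2 / (2 * t))

theorem hopfLax_even {E : Type*} [SeminormedAddCommGroup E] {φ : E → ℝ} (hφ : Function.Even φ)
    (t : ℝ) : Function.Even (hopfLax t φ) := by
  intro x
  refine (Equiv.neg E).iInf_congr fun y => ?_
  rw [Equiv.neg_apply, hφ y, ← norm_neg (-x - y), neg_sub', neg_neg]

variable {E : Type*} [NormedAddCommGroup E] [InnerProductSpace ℝ E] {φ : E → ℝ} {t : ℝ} {x : E}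

theorem hasFDerivAt_add_norm_sub_sq_div (c t : ℝ) (x y : E) :
    HasFDerivAt (fun z => c + ‖z - y‖ ^ 2 / (2 * t)) (t⁻¹ • innerSL ℝ (x - y)) x := by
  have hsq : HasFDerivAt (fun z => ‖z - y‖ ^ 2) (2 • innerSL ℝ (x - y)) x :=
    ((hasFDerivAt_id x).sub_const y).norm_sq
  convert! (hsq.mul_const (2 * t)⁻¹).const_add c using 1
  rw [← Nat.cast_smul_eq_nsmul ℝ, smul_smul, mul_inv]
  congr 1
  ring

theorem fderiv_hopfLax {y : E}
    (hb : ∀ x, BddBelow (range fun y => φ y + ‖x - y‖ ^ 2 / (2 * t)))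
    (hy : hopfLax t φ x = φ y + ‖x - y‖ ^ 2 / (2 * t))
    (hd : DifferentiableAt ℝ (hopfLax t φ) x) :
    fderiv ℝ (hopfLax t φ) x = t⁻¹ • innerSL ℝ (x - y) := by
  -- `w` touches the paraboloid centred at `y` from below at `x`.
  have hmax : IsLocalMax (fun z => hopfLax t φ z - (φ y + ‖z - y‖ ^ 2 / (2 * t))) x :=
    .of_forall fun z => by
      simp only [hy, sub_self, sub_nonpos]
      exact ciInf_le (hb z) y
  exact sub_eq_zero.mp <| hmax.hasFDerivAt_eq_zero <|
    hd.hasFDerivAt.sub (hasFDerivAt_add_norm_sub_sq_div (φ y) t x y)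

theorem eq_of_differentiableAt_hopfLax {y z : E} (ht : t ≠ 0)
    (hb : ∀ x, BddBelow (range fun y => φ y + ‖x - y‖ ^ 2 / (2 * t)))
    (hy : hopfLax t φ x = φ y + ‖x - y‖ ^ 2 / (2 * t))
    (hz : hopfLax t φ x = φ z + ‖x - z‖ ^ 2 / (2 * t))
    (hd : DifferentiableAt ℝ (hopfLax t φ) x) : y = z := by
  have hgrad : t⁻¹ • innerSL ℝ (x - y) = t⁻¹ • innerSL ℝ (x - z) :=
    (fderiv_hopfLax hb hy hd).symm.trans (fderiv_hopfLax hb hz hd)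
  exact sub_right_injective <| innerSL_inj.mp <| smul_right_injective _ (inv_ne_zero ht) hgrad

theorem not_differentiableAt_hopfLax_zero {y : E} (ht : t ≠ 0) (hφ : Function.Even φ)
    (hb : ∀ x, BddBelow (range fun y => φ y + ‖x - y‖ ^ 2 / (2 * t)))
    (hy : hopfLax t φ 0 = φ y + ‖y‖ ^ 2 / (2 * t)) (hy0 : y ≠ 0) :
    ¬ DifferentiableAt ℝ (hopfLax t φ) 0 := by
  intro hd
  have hself : y = -y := eq_of_differentiableAt_hopfLax ht hb
    (by simpa only [zero_sub, norm_neg] using hy)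
    (by simpa only [zero_sub, neg_neg, hφ y] using hy) hd
  have : IsAddTorsionFree E := .of_isTorsionFree ℝ E
  exact hy0 (self_eq_neg.mp hself)

end HopfLax

section Radial

variable {α t r : ℝ}

theorem rpow_le_rpow_add_mul_sq_sub_sq {s : ℝ} (hα0 : 0 ≤ α) (hα2 : α ≤ 2) (hr : 0 ≤ r)
    (hs : 0 < s) : r ^ α ≤ s ^ α + α / 2 * s ^ (α - 2) * (r ^ 2 - s ^ 2) := by
  have hbernoulli : (1 + ((r / s) ^ 2 - 1)) ^ (α / 2) ≤ 1 + α / 2 * ((r / s) ^ 2 - 1) :=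
    rpow_one_add_le_one_add_mul_self (by linarith [sq_nonneg (r / s)]) (by linarith)
      (by linarith)
  have hratio : (r / s) ^ α = (1 + ((r / s) ^ 2 - 1)) ^ (α / 2) := by
    rw [add_sub_cancel, ← Real.rpow_natCast_mul (by positivity)]
    congr 1
    push_cast
    ring
  have hpow : s ^ (α - 2) = s ^ α / s ^ 2 := by
    rw [Real.rpow_sub hs, Real.rpow_two]
  calc r ^ α = s ^ α * (r / s) ^ α := by
        rw [← Real.mul_rpow hs.le (by positivity), mul_div_cancel₀ r hs.ne']
    _ ≤ s ^ α * (1 + α / 2 * ((r / s) ^ 2 - 1)) := by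
        rw [hratio]
        gcongr
    _ = s ^ α + α / 2 * s ^ (α - 2) * (r ^ 2 - s ^ 2) := by
        rw [hpow]
        field_simp

/-- The radius minimizing `-r ^ α + r ^ 2 / (2 * t)` over `r ≥ 0`, for `0 < α < 2` and `0 < t`:
the positive solution of `α * r ^ (α - 1) = r / t`. -/
noncomputable def hopfRadius (α t : ℝ) : ℝ :=
  (α * t) ^ (1 / (2 - α))

theorem hopfRadius_pos (hα : 0 < α) (ht : 0 < t) : 0 < hopfRadius α t :=
  Real.rpow_pos_of_pos (mul_pos hα ht) _

theorem hopfRadius_rpow_sub_two (hα0 : 0 < α) (hα2 : α ≠ 2) (ht : 0 < t) :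
    hopfRadius α t ^ (α - 2) = (α * t)⁻¹ := by
  have hexp : 1 / (2 - α) * (α - 2) = -1 := by
    rw [← neg_sub 2 α, mul_neg, one_div_mul_cancel (sub_ne_zero.mpr hα2.symm)]
  rw [hopfRadius, ← Real.rpow_mul (mul_pos hα0 ht).le, hexp, Real.rpow_neg_one]

theorem neg_hopfRadius_rpow_add_sq_div_le (hα0 : 0 < α) (hα2 : α < 2) (ht : 0 < t) (hr : 0 ≤ r) :
    -hopfRadius α t ^ α + hopfRadius α t ^ 2 / (2 * t) ≤ -r ^ α + r ^ 2 / (2 * t) := by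
  have htangent := rpow_le_rpow_add_mul_sq_sub_sq hα0.le hα2.le hr (hopfRadius_pos hα0 ht)
  have hslope : α / 2 * hopfRadius α t ^ (α - 2) = 1 / (2 * t) := by
    rw [hopfRadius_rpow_sub_two hα0 hα2.ne ht]
    field_simp
  rw [hslope, one_div_mul_eq_div, sub_div] at htangent
  linarith

end Radial

section NormRPow

variable {E : Type*} [SeminormedAddCommGroup E] {α t : ℝ}

theorem bddBelow_range_neg_norm_rpow_add (hα0 : 0 < α) (hα2 : α < 2) (ht : 0 < t) (x : E) :
    BddBelow (range fun y : E => -‖y‖ ^ α + ‖x - y‖ ^ 2 / (2 * t)) := by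
  -- Half of the quadratic term controls `‖y‖ ^ α`: use the radial bound at time `2t`.
  let R := hopfRadius α (2 * t)
  refine ⟨-R ^ α + R ^ 2 / (2 * (2 * t)) - ‖x‖ ^ 2 / (2 * t), ?_⟩
  rintro _ ⟨y, rfl⟩
  have hradial : -R ^ α + R ^ 2 / (2 * (2 * t)) ≤ -‖y‖ ^ α + ‖y‖ ^ 2 / (2 * (2 * t)) :=
    neg_hopfRadius_rpow_add_sq_div_le hα0 hα2 (by positivity) (norm_nonneg y)
  have hsq : ‖y‖ ^ 2 ≤ 2 * (‖x‖ ^ 2 + ‖x - y‖ ^ 2) := by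
    calc ‖y‖ ^ 2 ≤ (‖x‖ + ‖x - y‖) ^ 2 := by
          gcongr
          exact norm_le_norm_add_norm_sub x y
      _ ≤ 2 * (‖x‖ ^ 2 + ‖x - y‖ ^ 2) := add_sq_le
  have hdiv : ‖y‖ ^ 2 / (2 * (2 * t)) ≤ ‖x‖ ^ 2 / (2 * t) + ‖x - y‖ ^ 2 / (2 * t) := by
    calc ‖y‖ ^ 2 / (2 * (2 * t)) ≤ 2 * (‖x‖ ^ 2 + ‖x - y‖ ^ 2) / (2 * (2 * t)) := by gcongr
      _ = ‖x‖ ^ 2 / (2 * t) + ‖x - y‖ ^ 2 / (2 * t) := by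
        rw [mul_div_mul_left _ _ two_ne_zero, add_div]
  change _ ≤ -‖y‖ ^ α + ‖x - y‖ ^ 2 / (2 * t)
  linarith

theorem hopfLax_neg_norm_rpow_zero {y : E} (hα0 : 0 < α) (hα2 : α < 2) (ht : 0 < t)
    (hy : ‖y‖ = hopfRadius α t) :
    hopfLax t (fun y : E => -‖y‖ ^ α) 0 = -‖y‖ ^ α + ‖y‖ ^ 2 / (2 * t) := by
  simp only [hopfLax, zero_sub, norm_neg]
  have hmin : ∀ z : E, -‖y‖ ^ α + ‖y‖ ^ 2 / (2 * t) ≤ -‖z‖ ^ α + ‖z‖ ^ 2 / (2 * t) := fun z => by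
    rw [hy]
    exact neg_hopfRadius_rpow_add_sq_div_le hα0 hα2 ht (norm_nonneg z)
  exact le_antisymm (ciInf_le ⟨_, forall_mem_range.mpr hmin⟩ y) (le_ciInf hmin)

end NormRPow

theorem hopfSlice_eq_hopfLax (α t : ℝ) : hopfSlice α t = hopfLax t fun y : ℝ => -‖y‖ ^ α := by
  funext x
  simp only [hopfSlice, hopfLax, Real.norm_eq_abs, sq_abs]

theorem stmt5_general {E : Type*} [NormedAddCommGroup E] [InnerProductSpace ℝ E] [Nontrivial E]
    (α t : ℝ) (hα0 : 0 < α) (hα2 : α < 2) (ht : 0 < t) :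
    (∀ x : E, BddBelow (range fun y : E => -‖y‖ ^ α + ‖x - y‖ ^ 2 / (2 * t))) ∧
    (∀ x : E, hopfLax t (fun y : E => -‖y‖ ^ α) (-x) = hopfLax t (fun y : E => -‖y‖ ^ α) x) ∧
    ¬ DifferentiableAt ℝ (hopfLax t fun y : E => -‖y‖ ^ α) 0 := by
  have hb := bddBelow_range_neg_norm_rpow_add (E := E) hα0 hα2 ht
  have heven : Function.Even fun y : E => -‖y‖ ^ α := fun y => by simp only [norm_neg]
  have hR : 0 < hopfRadius α t := hopfRadius_pos hα0 ht
  obtain ⟨y, hy⟩ := exists_norm_eq E hR.le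
  have hy0 : y ≠ 0 := norm_pos_iff.mp (hy ▸ hR)
  exact ⟨hb, hopfLax_even heven t, not_differentiableAt_hopfLax_zero ht.ne' heven hb
    (hopfLax_neg_norm_rpow_zero hα0 hα2 ht hy) hy0⟩

/-- For `1 < α < 2` and `t > 0`, the function `w = hopfSlice α t` is finite everywhere (the
infimum is over a set bounded below), is even, and is not differentiable at `x = 0`. -/
theorem stmt5 (α t : ℝ) (hα1 : 1 < α) (hα2 : α < 2) (ht : 0 < t) :
    (∀ x : ℝ, BddBelow (Set.range fun y : ℝ => -|y| ^ α + (x - y) ^ 2 / (2 * t))) ∧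
    (∀ x : ℝ, hopfSlice α t (-x) = hopfSlice α t x) ∧
    ¬ DifferentiableAt ℝ (hopfSlice α t) 0 := by
  simpa only [hopfSlice_eq_hopfLax, Real.norm_eq_abs, sq_abs] using
    stmt5_general (E := ℝ) α t (zero_lt_one.trans hα1) hα2 ht
end

section
/- Define u₀ : ℝ → ℝ by u₀(y) = y² sin(1/y) for y ≠ 0 and u₀(0) = 0. Then proximal subdifferentiability of u₀ fails to hold with a uniform constant near 0: for every K > 0 and every r > 0 there exists y with 0 < |y| < r such that u₀ has no proximal K-subgradient at y. -/
/-- The initial datum `u₀(y) = y² sin(1/y)` for `y ≠ 0`, `u₀(0) = 0`. -/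
noncomputable def u₀ : ℝ → ℝ :=
  fun y => if y = 0 then 0 else y ^ 2 * Real.sin (1 / y)

/-- `p` is a proximal `K`-subgradient of `v : ℝ → ℝ` at `x₀`. -/
def IsProxSubgrad (v : ℝ → ℝ) (x₀ p K : ℝ) : Prop :=
  ∃ r > 0, ∀ x : ℝ, |x - x₀| < r →
    v x₀ + p * (x - x₀) - K / 2 * (x - x₀) ^ 2 ≤ v x

/-!
Where `v` is twice differentiable, a proximal `K`-subgradient `p` at `x₀` makes `x₀` a local minimum
of `v - p (· - x₀) + K / 2 (· - x₀)²`, which forces `v''(x₀) ≥ -K`. At the points `y = 1 / a` with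
`a = π / 2 + 2 π n` one has `sin (1 / y) = 1` and `cos (1 / y) = 0`, so `u₀''(y) = 2 - a²`, which
tends to `-∞` as `n → ∞` while `y → 0`.
-/

open Filter Topology Real

section SecondOrder

variable {v : ℝ → ℝ} {x₀ p K : ℝ}

theorem deriv_deriv_nonneg_of_isLocalMin (hmin : IsLocalMin v x₀) (hc : ContinuousAt v x₀) :
    0 ≤ deriv (deriv v) x₀ := by
  by_contra! hneg
  -- The second-derivative test makes `x₀` a local maximum too, so `v` is constant near `x₀`.
  have hmax : IsLocalMax v x₀ := isLocalMax_of_deriv_deriv_neg hneg hmin.deriv_eq_zero hc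
  have hconst : v =ᶠ[𝓝 x₀] fun _ => v x₀ := by
    filter_upwards [hmin, hmax] with x hge hle using le_antisymm hle hge
  have hzero : deriv (deriv v) x₀ = 0 := by simp [hconst.deriv.deriv_eq]
  exact hneg.ne hzero

theorem isProxSubgrad_iff_isLocalMin :
    IsProxSubgrad v x₀ p K ↔
      IsLocalMin (fun x => v x - p * (x - x₀) + K / 2 * (x - x₀) ^ 2) x₀ := by
  simp only [IsProxSubgrad, IsLocalMin, IsMinFilter, Metric.eventually_nhds_iff, Real.dist_eq]
  refine exists_congr fun r => and_congr_right fun _ => forall_congr' fun x =>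
    imp_congr_right fun _ => ?_
  constructor <;> intro h <;> linarith

theorem neg_le_deriv_deriv_of_isProxSubgrad (h : IsProxSubgrad v x₀ p K)
    (hv : ∀ᶠ x in 𝓝 x₀, DifferentiableAt ℝ v x) (hv' : DifferentiableAt ℝ (deriv v) x₀) :
    -K ≤ deriv (deriv v) x₀ := by
  let g : ℝ → ℝ := fun x => v x - p * (x - x₀) + K / 2 * (x - x₀) ^ 2
  have hlin (x : ℝ) : HasDerivAt (fun x => x - x₀) 1 x := (hasDerivAt_id x).sub_const x₀
  have hderiv : ∀ᶠ x in 𝓝 x₀, HasDerivAt g (deriv v x - p + K * (x - x₀)) x := by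
    filter_upwards [hv] with x hx
    exact ((hx.hasDerivAt.sub ((hlin x).const_mul p)).add
      (((hlin x).pow 2).const_mul (K / 2))).congr_deriv (by ring)
  have hderiv₂ : HasDerivAt (deriv g) (deriv (deriv v) x₀ + K * 1) x₀ :=
    ((hv'.hasDerivAt.sub_const p).add ((hlin x₀).const_mul K)).congr_of_eventuallyEq
      (hderiv.mono fun _ hx => hx.deriv)
  have hnonneg : 0 ≤ deriv (deriv g) x₀ := deriv_deriv_nonneg_of_isLocalMin
    (isProxSubgrad_iff_isLocalMin.mp h) hderiv.self_of_nhds.continuousAt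
  rw [hderiv₂.deriv] at hnonneg
  linarith

end SecondOrder

section Derivatives

variable {y : ℝ}

theorem hasDerivAt_sin_one_div (hy : y ≠ 0) :
    HasDerivAt (fun y => sin (1 / y)) (-cos (1 / y) / y ^ 2) y := by
  simp only [one_div]
  exact (hasDerivAt_inv hy).sin.congr_deriv (by ring)

theorem hasDerivAt_cos_one_div (hy : y ≠ 0) :
    HasDerivAt (fun y => cos (1 / y)) (sin (1 / y) / y ^ 2) y := by
  simp only [one_div]
  exact (hasDerivAt_inv hy).cos.congr_deriv (by ring)

theorem hasDerivAt_u₀ (hy : y ≠ 0) :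
    HasDerivAt u₀ (2 * y * sin (1 / y) - cos (1 / y)) y := by
  have heq : u₀ =ᶠ[𝓝 y] fun y => y ^ 2 * sin (1 / y) := by
    filter_upwards [eventually_ne_nhds hy] with x hx using if_neg hx
  refine (((hasDerivAt_pow 2 y).mul (hasDerivAt_sin_one_div hy)).congr_deriv
    ?_).congr_of_eventuallyEq heq
  field_simp
  ring

theorem hasDerivAt_deriv_u₀ (hy : y ≠ 0) :
    HasDerivAt (deriv u₀) ((2 - 1 / y ^ 2) * sin (1 / y) - 2 / y * cos (1 / y)) y := by
  have heq : deriv u₀ =ᶠ[𝓝 y] fun y => 2 * y * sin (1 / y) - cos (1 / y) := by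
    filter_upwards [eventually_ne_nhds hy] with x hx using (hasDerivAt_u₀ hx).deriv
  refine (((((hasDerivAt_id y).const_mul 2).mul (hasDerivAt_sin_one_div hy)).sub
    (hasDerivAt_cos_one_div hy)).congr_deriv ?_).congr_of_eventuallyEq heq
  simp only [id_eq]
  field_simp
  ring

end Derivatives

theorem not_isProxSubgrad_u₀ {y p K : ℝ} (hy : y ≠ 0) (hK : deriv (deriv u₀) y < -K) :
    ¬ IsProxSubgrad u₀ y p K := fun h =>
  hK.not_ge <| neg_le_deriv_deriv_of_isProxSubgrad h
    ((eventually_ne_nhds hy).mono fun _ hx => (hasDerivAt_u₀ hx).differentiableAt)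
    (hasDerivAt_deriv_u₀ hy).differentiableAt

theorem tendsto_pi_div_two_add_nat_mul_two_pi_atTop :
    Tendsto (fun n : ℕ => π / 2 + n * (2 * π)) atTop atTop :=
  tendsto_atTop_add_const_left _ _ <|
    tendsto_natCast_atTop_atTop.atTop_mul_const two_pi_pos

theorem tendsto_deriv_deriv_u₀_atBot :
    Tendsto (fun n : ℕ => deriv (deriv u₀) (π / 2 + n * (2 * π))⁻¹) atTop atBot := by
  have heq (n : ℕ) : deriv (deriv u₀) (π / 2 + n * (2 * π))⁻¹ =
      2 - (π / 2 + n * (2 * π)) ^ 2 := by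
    have hpos : 0 < π / 2 + n * (2 * π) := by positivity
    have hsin : sin (π / 2 + n * (2 * π)) = 1 := by rw [sin_add_nat_mul_two_pi, sin_pi_div_two]
    have hcos : cos (π / 2 + n * (2 * π)) = 0 := by rw [cos_add_nat_mul_two_pi, cos_pi_div_two]
    rw [(hasDerivAt_deriv_u₀ (inv_pos.mpr hpos).ne').deriv]
    simp only [one_div, inv_pow, inv_inv, hsin, hcos, mul_one, mul_zero, sub_zero]
  simp only [heq, sub_eq_add_neg]
  exact tendsto_atBot_add_const_left _ _ <| tendsto_neg_atTop_atBot.comp <|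
    (tendsto_pow_atTop two_ne_zero).comp tendsto_pi_div_two_add_nat_mul_two_pi_atTop

theorem frequently_deriv_deriv_u₀_lt (C : ℝ) :
    ∃ᶠ y in 𝓝[>] (0 : ℝ), deriv (deriv u₀) y < C :=
  (tendsto_inv_atTop_nhdsGT_zero.comp tendsto_pi_div_two_add_nat_mul_two_pi_atTop).frequently
    (tendsto_deriv_deriv_u₀_atBot.eventually_lt_atBot C).frequently

/-- Proximal subdifferentiability of `u₀` fails with a uniform constant near `0`: for
every `K > 0` and every `r > 0` there is `y` with `0 < |y| < r` at which `u₀` has no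
proximal `K`-subgradient. -/
theorem stmt16 :
    ∀ K > 0, ∀ r > 0, ∃ y : ℝ, 0 < |y| ∧ |y| < r ∧
      ∀ p : ℝ, ¬ IsProxSubgrad u₀ y p K := by
  intro K _ r hr
  obtain ⟨y, hlt, hy_pos, hy_lt⟩ :=
    ((frequently_deriv_deriv_u₀_lt (-K)).and_eventually (Ioo_mem_nhdsGT hr)).exists
  have habs : |y| = y := abs_of_pos hy_pos
  exact ⟨y, habs.symm ▸ hy_pos, habs.symm ▸ hy_lt, fun _ => not_isProxSubgrad_u₀ hy_pos.ne' hlt⟩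
end
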